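/- Let 𝒜 be a finite nonempty set and M : 𝒜 × 𝒜 → ℕ with M_{j,j} ≥ 1 for all j ∈ 𝒜. Then for every z ∈ ℍ there exists exactly one family Γ : 𝒜 → ℂ with Im Γ_j > 0 for all j ∈ 𝒜 satisfying the system of equations − 1 / Γ_j = z + Σ_{k∈𝒜} M_{j,k} Γ_k for all j ∈ 𝒜 (the system satisfied by the forward Green functions of the adjacency operator of the trees of finite cone type built from M). -/

import Mathlib

/-- The Möbius-invariant quantity `‖a - b‖² / (Im a · Im b)`, an increasing function of the
hyperbolic distance on the upper half-plane. -/
noncomputable def halfPlaneGap (a b : ℂ) : ℝ :=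
  ‖a - b‖ ^ 2 / (a.im * b.im)

/-- The self-map of the product of upper half-planes whose fixed points solve the recursion. -/
noncomputable def greenMap {𝒜 : Type*} [Fintype 𝒜] (M : 𝒜 → 𝒜 → ℕ) (z : ℂ) (Γ : 𝒜 → ℂ) (j : 𝒜) :
    ℂ :=
  -(z + ∑ k, (M j k : ℂ) * Γ k)⁻¹

theorem halfPlaneGap_neg_inv {u v : ℂ} (hu : 0 < u.im) (hv : 0 < v.im) :
    halfPlaneGap (-u⁻¹) (-v⁻¹) = halfPlaneGap u v := by
  have hu0 : u ≠ 0 := by rintro rfl; simp at hu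
  have hv0 : v ≠ 0 := by rintro rfl; simp at hv
  have hsub : -u⁻¹ - -v⁻¹ = (u - v) / (u * v) := by field_simp; ring
  have hnu : ‖u‖ ≠ 0 := norm_ne_zero_iff.mpr hu0
  have hnv : ‖v‖ ≠ 0 := norm_ne_zero_iff.mpr hv0
  simp only [halfPlaneGap, hsub, norm_div, norm_mul, Complex.neg_im, Complex.inv_im,
    Complex.normSq_eq_norm_sq]
  field_simp

theorem im_neg_inv (u : ℂ) : (-u⁻¹).im = u.im / ‖u‖ ^ 2 := by
  simp [Complex.inv_im, Complex.normSq_eq_norm_sq, neg_div]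

theorem eq_of_halfPlaneGap_nonpos {a b : ℂ} (ha : 0 < a.im) (hb : 0 < b.im)
    (h : halfPlaneGap a b ≤ 0) : a = b := by
  unfold halfPlaneGap at h
  rw [div_le_iff₀ (by positivity), zero_mul] at h
  have h0 : ‖a - b‖ = 0 := by nlinarith [norm_nonneg (a - b)]
  exact sub_eq_zero.mp (norm_eq_zero.mp h0)

section GreenMap

variable {𝒜 : Type*} [Fintype 𝒜] (M : 𝒜 → 𝒜 → ℕ) {z : ℂ}

theorem im_add_sum_natCast_mul (z : ℂ) (Γ : 𝒜 → ℂ) (j : 𝒜) :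
    (z + ∑ k, (M j k : ℂ) * Γ k).im = z.im + ∑ k, (M j k : ℝ) * (Γ k).im := by
  simp [Complex.im_sum]

theorem im_le_im_add_sum {Γ : 𝒜 → ℂ} (hΓ : ∀ k, 0 ≤ (Γ k).im) (j : 𝒜) :
    z.im ≤ (z + ∑ k, (M j k : ℂ) * Γ k).im := by
  rw [im_add_sum_natCast_mul]
  exact le_add_of_nonneg_right (Finset.sum_nonneg fun k _ => mul_nonneg (Nat.cast_nonneg _) (hΓ k))

theorem greenMap_im_pos (hz : 0 < z.im) {Γ : 𝒜 → ℂ} (hΓ : ∀ k, 0 ≤ (Γ k).im) (j : 𝒜) :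
    0 < (greenMap M z Γ j).im := by
  have hu := hz.trans_le (im_le_im_add_sum M hΓ j)
  have hu0 : z + ∑ k, (M j k : ℂ) * Γ k ≠ 0 := fun h => by simp [h] at hu
  rw [greenMap, im_neg_inv]
  positivity

theorem halfPlaneGap_greenMap_lt (hz : 0 < z.im) {a b : 𝒜 → ℂ} (ha : ∀ k, 0 < (a k).im)
    (hb : ∀ k, 0 < (b k).im) {D : ℝ} (hD : 0 < D) (h : ∀ k, halfPlaneGap (a k) (b k) ≤ D) (j : 𝒜) :
    halfPlaneGap (greenMap M z a j) (greenMap M z b j) < D := by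
  have hu := hz.trans_le (im_le_im_add_sum M (fun k => (ha k).le) j)
  have hv := hz.trans_le (im_le_im_add_sum M (fun k => (hb k).le) j)
  rw [greenMap, greenMap, halfPlaneGap_neg_inv hu hv, halfPlaneGap, div_lt_iff₀ (by positivity),
    im_add_sum_natCast_mul, im_add_sum_natCast_mul, add_sub_add_left_eq_sub,
    ← Finset.sum_sub_distrib]
  set A := ∑ k, (M j k : ℝ) * (a k).im with hA
  set B := ∑ k, (M j k : ℝ) * (b k).im with hB
  have hA0 : 0 ≤ A := Finset.sum_nonneg fun k _ => mul_nonneg (Nat.cast_nonneg _) (ha k).le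
  have hB0 : 0 ≤ B := Finset.sum_nonneg fun k _ => mul_nonneg (Nat.cast_nonneg _) (hb k).le
  have hnorm : ‖∑ k, ((M j k : ℂ) * a k - (M j k : ℂ) * b k)‖
      ≤ ∑ k, (M j k : ℝ) * ‖a k - b k‖ :=
    (norm_sum_le _ _).trans_eq (Finset.sum_congr rfl fun k _ => by
      rw [← mul_sub, norm_mul, Complex.norm_natCast])
  have hcs : (∑ k, (M j k : ℝ) * ‖a k - b k‖) ^ 2 ≤ D * A * B := by
    rw [hA, hB, Finset.mul_sum _ _ D]
    refine Finset.sum_sq_le_sum_mul_sum_of_sq_le_mul _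
      (fun k _ => mul_nonneg hD.le (mul_nonneg (Nat.cast_nonneg _) (ha k).le))
      (fun k _ => mul_nonneg (Nat.cast_nonneg _) (hb k).le) fun k _ => ?_
    have hk := h k
    rw [halfPlaneGap, div_le_iff₀ (mul_pos (ha k) (hb k))] at hk
    nlinarith [mul_le_mul_of_nonneg_left hk (sq_nonneg (M j k : ℝ))]
  have hlt : A * B < (z.im + A) * (z.im + B) := by
    nlinarith [mul_pos hz hz, mul_nonneg hz.le hA0, mul_nonneg hz.le hB0]
  calc _ ≤ (∑ k, (M j k : ℝ) * ‖a k - b k‖) ^ 2 := by gcongr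
    _ ≤ D * (A * B) := by rw [← mul_assoc]; exact hcs
    _ < _ := mul_lt_mul_of_pos_left hlt hD

/-- Largest `halfPlaneGap` between corresponding entries. -/
noncomputable def maxGap [Nonempty 𝒜] (a b : 𝒜 → ℂ) : ℝ :=
  Finset.univ.sup' Finset.univ_nonempty fun k => halfPlaneGap (a k) (b k)

theorem halfPlaneGap_le_maxGap [Nonempty 𝒜] (a b : 𝒜 → ℂ) (k : 𝒜) :
    halfPlaneGap (a k) (b k) ≤ maxGap a b :=
  Finset.le_sup' (fun k => halfPlaneGap (a k) (b k)) (Finset.mem_univ k)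

theorem maxGap_greenMap_lt [Nonempty 𝒜] (hz : 0 < z.im) {a b : 𝒜 → ℂ} (ha : ∀ k, 0 < (a k).im)
    (hb : ∀ k, 0 < (b k).im) (hab : a ≠ b) :
    maxGap (greenMap M z a) (greenMap M z b) < maxGap a b := by
  obtain ⟨i, hi⟩ := Function.ne_iff.mp hab
  have hpos : 0 < maxGap a b := by
    by_contra! hle
    exact hi (eq_of_halfPlaneGap_nonpos (ha i) (hb i) ((halfPlaneGap_le_maxGap a b i).trans hle))
  exact (Finset.sup'_lt_iff _).mpr fun j _ =>
    halfPlaneGap_greenMap_lt M hz ha hb hpos (halfPlaneGap_le_maxGap a b) j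

theorem norm_greenMap_le (hz : 0 < z.im) {Γ : 𝒜 → ℂ} (hΓ : ∀ k, 0 ≤ (Γ k).im) (j : 𝒜) :
    ‖greenMap M z Γ j‖ ≤ z.im⁻¹ := by
  rw [greenMap, norm_neg, norm_inv]
  exact inv_anti₀ hz ((im_le_im_add_sum M hΓ j).trans
    ((le_abs_self _).trans (Complex.abs_im_le_norm _)))

theorem le_greenMap_im (hz : 0 < z.im) {Γ : 𝒜 → ℂ} (hΓ : ∀ k, 0 ≤ (Γ k).im) {R : ℝ} (hR : 0 ≤ R)
    (hn : ∀ k, ‖Γ k‖ ≤ R) (j : 𝒜) :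
    z.im / (‖z‖ + (∑ i, ∑ k, (M i k : ℝ)) * R) ^ 2 ≤ (greenMap M z Γ j).im := by
  have hu := im_le_im_add_sum (z := z) M hΓ j
  have hu0 : z + ∑ k, (M j k : ℂ) * Γ k ≠ 0 := fun h => by
    rw [h, Complex.zero_im] at hu; exact hz.not_ge hu
  have hle : ‖z + ∑ k, (M j k : ℂ) * Γ k‖ ≤ ‖z‖ + (∑ i, ∑ k, (M i k : ℝ)) * R := by
    refine (norm_add_le _ _).trans (add_le_add_right ((norm_sum_le _ _).trans ?_) _)
    calc ∑ k, ‖(M j k : ℂ) * Γ k‖ ≤ ∑ k, (M j k : ℝ) * R :=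
          Finset.sum_le_sum fun k _ => by
            rw [norm_mul, Complex.norm_natCast]
            exact mul_le_mul_of_nonneg_left (hn k) (Nat.cast_nonneg _)
      _ = (∑ k, (M j k : ℝ)) * R := (Finset.sum_mul ..).symm
      _ ≤ _ := mul_le_mul_of_nonneg_right
          (Finset.single_le_sum (f := fun i => ∑ k, (M i k : ℝ))
            (fun i _ => Finset.sum_nonneg fun k _ => Nat.cast_nonneg _) (Finset.mem_univ j)) hR
  rw [greenMap, im_neg_inv]
  have hpos := norm_pos_iff.mpr hu0
  have him := hz.le.trans hu
  gcongr

/-- A point of a compact invariant set minimizing `maxGap` to its image is fixed. -/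
theorem exists_greenMap_eq_self [Nonempty 𝒜] (hz : 0 < z.im) :
    ∃ Γ : 𝒜 → ℂ, (∀ j, 0 < (Γ j).im) ∧ greenMap M z Γ = Γ := by
  have hz0 : 0 < ‖z‖ := hz.trans_le ((le_abs_self _).trans (Complex.abs_im_le_norm z))
  have hR : 0 ≤ z.im⁻¹ := inv_nonneg.mpr hz.le
  set ε := z.im / (‖z‖ + (∑ i, ∑ k, (M i k : ℝ)) * z.im⁻¹) ^ 2
  have hε : 0 < ε := by positivity
  let S : Set ℂ := Metric.closedBall 0 z.im⁻¹ ∩ {w | ε ≤ w.im}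
  let K : Set (𝒜 → ℂ) := Set.univ.pi fun _ => S
  have hS : IsCompact S := (isCompact_closedBall _ _).inter_right
    (isClosed_le continuous_const Complex.continuous_im)
  have hK : IsCompact K := isCompact_univ_pi fun _ => hS
  have hKim {Γ} (hΓ : Γ ∈ K) (j : 𝒜) : 0 < (Γ j).im := hε.trans_le (hΓ j trivial).2
  have maps {Γ : 𝒜 → ℂ} (him : ∀ k, 0 ≤ (Γ k).im) (hn : ∀ k, ‖Γ k‖ ≤ z.im⁻¹) :
      greenMap M z Γ ∈ K := fun j _ =>
    ⟨mem_closedBall_zero_iff.mpr (norm_greenMap_le M hz him j), le_greenMap_im M hz him hR hn j⟩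
  have hcont (j : 𝒜) : ContinuousOn (fun Γ => greenMap M z Γ j) K := by
    refine (ContinuousOn.inv₀ (by fun_prop) fun Γ hΓ h => ?_).neg
    have := im_le_im_add_sum (z := z) M (fun k => (hKim hΓ k).le) j
    rw [h, Complex.zero_im] at this
    exact hz.not_ge this
  have hgap : ContinuousOn (fun Γ => maxGap Γ (greenMap M z Γ)) K := by
    refine ContinuousOn.finset_sup'_apply _ fun j _ => ?_
    have hj : ContinuousOn (fun Γ : 𝒜 → ℂ => Γ j) K := by fun_prop
    refine ((hj.sub (hcont j)).norm.pow 2).div ((Complex.continuous_im.comp_continuousOn hj).mul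
      (Complex.continuous_im.comp_continuousOn (hcont j))) fun Γ hΓ => ?_
    exact (mul_pos (hKim hΓ j) (greenMap_im_pos M hz (fun k => (hKim hΓ k).le) j)).ne'
  obtain ⟨Γ, hΓ, hmin⟩ := hK.exists_isMinOn
    ⟨_, maps (Γ := 0) (fun _ => le_rfl) fun _ => by simpa using hz.le⟩ hgap
  have hΦ : greenMap M z Γ ∈ K := maps (fun k => (hKim hΓ k).le) fun k =>
    mem_closedBall_zero_iff.mp (hΓ k trivial).1
  refine ⟨Γ, hKim hΓ, ?_⟩
  by_contra hne
  exact (hmin hΦ).not_gt (maxGap_greenMap_lt M hz (hKim hΓ) (hKim hΦ) (Ne.symm hne))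

theorem greenMap_eq_self_iff {Γ : 𝒜 → ℂ} :
    greenMap M z Γ = Γ ↔ ∀ j, -(1 / Γ j) = z + ∑ k, (M j k : ℂ) * Γ k := by
  refine funext_iff.trans (forall_congr' fun j => ?_)
  rw [greenMap, one_div, neg_eq_iff_eq_neg, neg_eq_iff_eq_neg, inv_eq_iff_eq_inv, inv_neg,
    eq_neg_iff_add_eq_zero, eq_neg_iff_add_eq_zero, add_comm]

end GreenMap

/-- For each `z` in the upper half-plane there is exactly one family `Γ` of
upper half-plane values satisfying the recursion formula for the forward
Green functions of the trees of finite cone type built from `M`. -/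
theorem green_recursion_existsUnique {𝒜 : Type*} [Fintype 𝒜] [Nonempty 𝒜]
    (M : 𝒜 → 𝒜 → ℕ) (hM : ∀ j, 1 ≤ M j j) (z : ℂ) (hz : 0 < z.im) :
    ∃! Γ : 𝒜 → ℂ, (∀ j, 0 < (Γ j).im) ∧
      ∀ j, -(1 / Γ j) = z + ∑ k, (M j k : ℂ) * Γ k := by
  simp only [← greenMap_eq_self_iff]
  obtain ⟨Γ, hΓ, hfix⟩ := exists_greenMap_eq_self M hz
  refine ⟨Γ, ⟨hΓ, hfix⟩, fun Γ' ⟨hΓ', hfix'⟩ => ?_⟩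
  by_contra hne
  have hlt := maxGap_greenMap_lt M hz hΓ' hΓ hne
  rw [hfix, hfix'] at hlt
  exact hlt.false
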